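/- Let α ∈ (0,1) be an irrational number and let (qₙ) be the sequence of denominators of the convergents of the regular continued fraction expansion of α. Then the set-difference t^s_{(qₙ)}(𝕋) \ t_{(qₙ)}(𝕋) has cardinality 𝔠 (the cardinality of the continuum). -/

import Mathlib

open Filter Topology

noncomputable section

/-- The circle group `𝕋 = ℝ/ℤ`. -/
abbrev Circle1 : Type := AddCircle (1 : ℝ)

/-- A set of naturals has natural density zero. -/
def DensityZero (A : Set ℕ) : Prop :=
  Tendsto (fun n : ℕ => ((A ∩ Set.Icc 1 n).ncard : ℝ) / n) atTop (𝓝 0)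

/-- Statistical convergence to `0` of a sequence in the circle. -/
def StatTendstoZero (x : ℕ → Circle1) : Prop :=
  ∀ ε : ℝ, 0 < ε → DensityZero {n : ℕ | ε ≤ ‖x n‖}

/-- The characterized subgroup `t_(a_n)(𝕋)`. -/
def charSet (a : ℕ → ℤ) : Set Circle1 :=
  {x : Circle1 | Tendsto (fun n : ℕ => a n • x) atTop (𝓝 0)}

/-- The statistically characterized subgroup `t^s_(a_n)(𝕋)`. -/
def statCharSet (a : ℕ → ℤ) : Set Circle1 :=
  {x : Circle1 | StatTendstoZero (fun n : ℕ => a n • x)}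

namespace CF

/-- Gauss-map orbit of `α`: `G α 0 = α`, `G α (n+1) = {1 / G α n}`. -/
def G (α : ℝ) : ℕ → ℝ
  | 0 => α
  | n + 1 => Int.fract (G α n)⁻¹

/-- The partial quotients of the regular continued fraction `α = [0; a 1, a 2, …]`
(with the convention `a 0 = 0`). -/
def a (α : ℝ) : ℕ → ℕ
  | 0 => 0
  | n + 1 => ⌊(G α n)⁻¹⌋₊

/-- Denominators of the convergents of the continued fraction of `α`. -/
def q (α : ℝ) : ℕ → ℕ
  | 0 => 1
  | 1 => a α 1
  | (n + 2) => a α (n + 2) * q α (n + 1) + q α n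

/-- Numerators of the convergents of the continued fraction of `α`. -/
def p (α : ℝ) : ℕ → ℕ
  | 0 => 0
  | 1 => 1
  | (n + 2) => a α (n + 2) * p α (n + 1) + p α n

/-- `θ n = q n * α - p n`. -/
def θ (α : ℝ) (n : ℕ) : ℝ := (q α n : ℝ) * α - (p α n : ℝ)

end CF

open CF

/-! Both `q n • θ m` and `q m • θ n` equal `q n * q m * α` modulo `1`. For `n ≤ m` the real number
`q n * θ m` is small because `q` grows geometrically, and for `n ≥ m` the number `q m * θ n` is
small because `θ` decays geometrically; so the class of `c * θ m`, for a suitable integer `c`, is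
norm-small under `q n` as soon as `n` is far from `m`, at a rate depending on `|n - m|` only. Of any
two consecutive indices, one satisfies `q m * |θ m| ≤ 1 / 2`, and then `c` can be chosen with
`c * q m * |θ m| ∈ [1 / 4, 1 / 2]`, which keeps `q m • (c * θ m)` away from `0`.

For a sequence `m k` with gaps tending to infinity and a coefficient sequence `e` with values in
`{-1, 0, 1}` and infinite support, let `x` be the sum of the `e k * c k * θ (m k)`. Then `q n • x`
is small for `n` far from all `m k`, hence off a set of density zero, but not along the `n = m k`
with `e k ≠ 0`. As the difference of two sums with `e` valued in `{0, 1}` is again of this form,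
continuum many indicator sequences with pairwise infinite symmetric difference give distinct `x`. -/

section StatisticalConvergence

open Asymptotics Set symmDiff
open scoped Cardinal

namespace DensityZero

variable {A B : Set ℕ}

theorem of_isLittleO {f : ℕ → ℝ} (hf : f =o[atTop] fun n : ℕ => (n : ℝ))
    (h : ∀ n, ((A ∩ Icc 1 n).ncard : ℝ) ≤ f n) : DensityZero A := by
  refine IsLittleO.tendsto_div_nhds_zero (IsBigO.trans_isLittleO (.of_bound' ?_) hf)
  exact .of_forall fun n => by simpa using (h n).trans (le_abs_self _)

theorem isLittleO (hA : DensityZero A) :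
    (fun n : ℕ => ((A ∩ Icc 1 n).ncard : ℝ)) =o[atTop] fun n : ℕ => (n : ℝ) := by
  refine (isLittleO_iff_tendsto' ?_).2 hA
  filter_upwards [eventually_ne_atTop 0] with n hn h
  exact absurd (Nat.cast_eq_zero.1 h) hn

theorem mono (hB : DensityZero B) (hAB : A ⊆ B) : DensityZero A :=
  of_isLittleO hB.isLittleO fun n => by
    gcongr
    exact ((finite_Icc 1 n).inter_of_right B)

theorem union (hA : DensityZero A) (hB : DensityZero B) : DensityZero (A ∪ B) :=
  of_isLittleO (hA.isLittleO.add hB.isLittleO) fun n => by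
    rw [union_inter_distrib_right]
    exact_mod_cast ncard_union_le _ _

theorem translate (hA : DensityZero A) (z : ℤ) :
    DensityZero {n : ℕ | ∃ a ∈ A, (n : ℤ) - a = z} := by
  have hconst := (isLittleO_const_id_atTop ((z.natAbs + 1 : ℕ) : ℝ)).natCast_atTop
  refine of_isLittleO (hA.isLittleO.add hconst) fun n => ?_
  have hsub : {n : ℕ | ∃ a ∈ A, (n : ℤ) - a = z} ∩ Icc 1 n ⊆
      (fun a : ℕ => (a + z).toNat) '' (A ∩ Icc 1 n ∪ insert 0 (Ioc n (n + z.natAbs))) := by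
    rintro i ⟨⟨a, ha, hz⟩, hi⟩
    simp only [mem_Icc, mem_image, mem_union, mem_inter_iff, mem_insert_iff, mem_Ioc] at hi ⊢
    exact ⟨a, by by_cases h : a ∈ Icc 1 n <;> grind, by omega⟩
  have hfin : (A ∩ Icc 1 n ∪ insert 0 (Ioc n (n + z.natAbs))).Finite :=
    ((finite_Icc 1 n).inter_of_right A).union ((finite_Ioc _ _).insert 0)
  have hIoc : (insert 0 (Ioc n (n + z.natAbs))).ncard ≤ z.natAbs + 1 :=
    (ncard_insert_le _ _).trans (by simp [ncard_eq_toFinset_card'])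
  exact_mod_cast (ncard_le_ncard hsub (hfin.image _)).trans <| (ncard_image_le hfin).trans <|
    (ncard_union_le _ _).trans (Nat.add_le_add_left hIoc _)

theorem thicken (hA : DensityZero A) (F : Finset ℤ) :
    DensityZero {n : ℕ | ∃ a ∈ A, (n : ℤ) - a ∈ F} := by
  induction F using Finset.induction with
  | empty => simp [DensityZero]
  | insert z F _ ih =>
    refine ((hA.translate z).union ih).mono ?_
    rintro n ⟨a, ha, hn⟩
    exact (Finset.mem_insert.1 hn).imp (⟨a, ha, ·⟩) (⟨a, ha, ·⟩)

theorem range_of_sq_le {m : ℕ → ℕ} {C : ℕ} (hm : ∀ k, k ^ 2 ≤ C * m k) :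
    DensityZero (range m) := by
  have hsqrt : Real.sqrt =o[atTop] id := by
    refine isLittleO_of_tendsto (by simp) ?_
    simp only [id, Real.sqrt_div_self]
    exact tendsto_inv_atTop_zero.comp Real.tendsto_sqrt_atTop
  have hbound := (hsqrt.const_mul_left √C).add (isLittleO_const_id_atTop (1 : ℝ))
  refine of_isLittleO hbound.natCast_atTop fun n => ?_
  have hsub : range m ∩ Icc 1 n ⊆ m '' Iio (Nat.sqrt (C * n) + 1) := by
    rintro _ ⟨⟨k, rfl⟩, -, hk⟩
    exact ⟨k, Nat.lt_succ_of_le (Nat.le_sqrt'.2 ((hm k).trans (by gcongr))), rfl⟩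
  calc ((range m ∩ Icc 1 n).ncard : ℝ)
      ≤ (Nat.sqrt (C * n) + 1 : ℕ) := by
        exact_mod_cast (ncard_le_ncard hsub ((finite_Iio _).image _)).trans <|
          (ncard_image_le (finite_Iio _)).trans_eq (by simp [ncard_eq_toFinset_card'])
    _ ≤ √(C * n) + 1 := by
        push_cast
        gcongr
        exact_mod_cast Real.nat_sqrt_le_real_sqrt (a := C * n)
    _ = √C * √n + 1 := by rw [Real.sqrt_mul (by positivity)]

end DensityZero

/-- The gap of `m` after its `k`-th term exceeds `k`; a convenient explicit form of
"the gaps of `m` tend to infinity". -/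
def HasLinearGaps (m : ℕ → ℕ) : Prop :=
  ∀ k, m k + k < m (k + 1)

namespace HasLinearGaps

variable {m : ℕ → ℕ}

theorem strictMono (hm : HasLinearGaps m) : StrictMono m :=
  strictMono_nat_of_lt_succ fun k => (Nat.le_add_right _ _).trans_lt (hm k)

theorem sq_le_two_mul (hm : HasLinearGaps m) (k : ℕ) : k ^ 2 ≤ 2 * m k := by
  induction k with
  | zero => simp
  | succ k ih => linarith [hm k, add_sq k 1]

theorem densityZero_range (hm : HasLinearGaps m) : DensityZero (range m) :=
  .range_of_sq_le hm.sq_le_two_mul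

theorem add_le (hm : HasLinearGaps m) {i j : ℕ} (hij : i < j) : m i + j ≤ m j := by
  obtain ⟨d, rfl⟩ := Nat.exists_eq_add_of_lt hij
  have hle : m i ≤ m (i + d) := hm.strictMono.monotone (Nat.le_add_right i d)
  have hgap := hm (i + d)
  omega

theorem eventually_sub_notMem (hm : HasLinearGaps m) (F : Finset ℤ) :
    ∀ᶠ k in atTop, ∀ j ≠ k, (m k : ℤ) - m j ∉ F := by
  filter_upwards [eventually_gt_atTop (F.sup Int.natAbs)] with k hk j hj hmem
  have hle : ((m k : ℤ) - m j).natAbs ≤ F.sup Int.natAbs := Finset.le_sup (f := Int.natAbs) hmem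
  rcases lt_or_gt_of_ne hj with h | h <;> have := hm.add_le h <;> omega

end HasLinearGaps

theorem norm_zsmul_le_of_abs_le_one {E : Type*} [SeminormedAddCommGroup E] {c : ℤ}
    (hc : |c| ≤ 1) (x : E) : ‖c • x‖ ≤ ‖x‖ := by
  have hc' : ‖c‖ ≤ 1 := by
    rw [Int.norm_eq_abs]
    exact_mod_cast hc
  exact (norm_zsmul_le c x).trans (mul_le_of_le_one_left (norm_nonneg x) hc')

/-- The vectors `u k` are localized at the indices `m k` for the multipliers `Q n`: the size of
`Q n • u k` is controlled by the offset `n - m k` through one summable profile `φ`. -/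
structure IsLocalized {E : Type*} [NormedAddCommGroup E] (Q : ℕ → ℤ) (m : ℕ → ℕ) (u : ℕ → E)
    (φ : ℤ → ℝ) : Prop where
  injective : Function.Injective m
  summable_norm : Summable fun k => ‖u k‖
  summable_profile : Summable φ
  norm_zsmul_le : ∀ n k, ‖Q n • u k‖ ≤ φ (n - m k)

namespace IsLocalized

variable {E : Type*} [NormedAddCommGroup E] [CompleteSpace E] {Q : ℕ → ℤ} {m : ℕ → ℕ}
  {u : ℕ → E} {φ : ℤ → ℝ} {e : ℕ → ℤ}

theorem summable_zsmul (h : IsLocalized Q m u φ) (he : ∀ k, |e k| ≤ 1) :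
    Summable fun k => e k • u k :=
  .of_norm_bounded h.summable_norm fun k => norm_zsmul_le_of_abs_le_one (he k) (u k)

theorem norm_zsmul_tsum_le (h : IsLocalized Q m u φ) (he : ∀ k, |e k| ≤ 1) (n : ℕ) :
    ‖Q n • ∑' k, e k • u k‖ ≤ ∑' z : (fun k => (n : ℤ) - m k) '' Function.support e, φ z := by
  have hinj : Function.Injective fun k => (n : ℤ) - m k := fun i j hij =>
    h.injective (by simpa using hij)
  rw [tsum_image φ hinj.injOn, ← (h.summable_zsmul he).tsum_const_smul,
    ← tsum_subtype_eq_of_support_subset (s := Function.support e)]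
  · refine tsum_of_norm_bounded (((h.summable_profile.comp_injective hinj).subtype _).hasSum)
      fun k => ?_
    rw [smul_comm]
    exact (norm_zsmul_le_of_abs_le_one (he k) _).trans (h.norm_zsmul_le n k)
  · exact fun k hk hek => hk (by simp [hek])

theorem exists_finset_norm_zsmul_tsum_lt (h : IsLocalized Q m u φ) {ε : ℝ} (hε : 0 < ε) :
    ∃ F : Finset ℤ, ∀ (n : ℕ) (e : ℕ → ℤ), (∀ k, |e k| ≤ 1) →
      (∀ k, e k ≠ 0 → (n : ℤ) - m k ∉ F) → ‖Q n • ∑' k, e k • u k‖ < ε := by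
  obtain ⟨F, hF⟩ := h.summable_profile.tsum_vanishing (Iio_mem_nhds hε)
  refine ⟨F, fun n e he hfar => (h.norm_zsmul_tsum_le he n).trans_lt (hF _ ?_)⟩
  rw [Set.disjoint_left]
  rintro _ ⟨k, hk, rfl⟩
  exact hfar k hk

theorem densityZero_le_norm_tsum (h : IsLocalized Q m u φ) (hm : DensityZero (range m))
    (he : ∀ k, |e k| ≤ 1) {ε : ℝ} (hε : 0 < ε) :
    DensityZero {n | ε ≤ ‖Q n • ∑' k, e k • u k‖} := by
  obtain ⟨F, hF⟩ := h.exists_finset_norm_zsmul_tsum_lt hε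
  refine (hm.thicken F).mono fun n hn => ?_
  by_contra! hfar
  exact (hF n e he fun k _ hk => hfar ⟨m k, mem_range_self k, hk⟩).not_ge hn

theorem tendsto_zsmul_tsum_sub (h : IsLocalized Q m u φ)
    (hm : ∀ F : Finset ℤ, ∀ᶠ k in atTop, ∀ j ≠ k, (m k : ℤ) - m j ∉ F) (he : ∀ k, |e k| ≤ 1) :
    Tendsto (fun k => Q (m k) • (∑' j, e j • u j - e k • u k)) atTop (𝓝 0) := by
  refine NormedAddGroup.tendsto_nhds_zero.2 fun ε hε => ?_
  obtain ⟨F, hF⟩ := h.exists_finset_norm_zsmul_tsum_lt hε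
  filter_upwards [hm F] with k hk
  have hsplit : ∑' j, e j • u j - e k • u k = ∑' j, Function.update e k 0 j • u j := by
    rw [(h.summable_zsmul he).tsum_eq_add_tsum_ite k, add_sub_cancel_left]
    refine tsum_congr fun j => ?_
    by_cases hj : j = k <;> simp [hj]
  rw [hsplit]
  refine hF _ _ (fun j => ?_) fun j hj => hk j fun hjk => hj (by simp [hjk])
  by_cases hj : j = k
  · simp [hj]
  · simpa [hj] using he j

theorem not_tendsto_zsmul_tsum (h : IsLocalized Q m u φ)
    (hm : ∀ F : Finset ℤ, ∀ᶠ k in atTop, ∀ j ≠ k, (m k : ℤ) - m j ∉ F) {δ : ℝ} (hδ : 0 < δ)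
    (hu : ∀ k, δ ≤ ‖Q (m k) • u k‖) (he : ∀ k, |e k| ≤ 1) (hinf : (Function.support e).Infinite) :
    ¬ Tendsto (fun n => Q n • ∑' k, e k • u k) atTop (𝓝 0) := by
  intro hlim
  have hterm : Tendsto (fun k => Q (m k) • e k • u k) atTop (𝓝 0) := by
    simpa [smul_sub] using
      (hlim.comp h.injective.nat_tendsto_atTop).sub (h.tendsto_zsmul_tsum_sub hm he)
  have hsmall := NormedAddGroup.tendsto_nhds_zero.1 hterm δ hδ
  obtain ⟨k, hk, hek⟩ :=
    (hsmall.and_frequently (Nat.frequently_atTop_iff_infinite.2 hinf)).exists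
  have hunit : IsUnit (e k) :=
    Int.isUnit_iff_abs_eq.2 ((he k).antisymm (Int.one_le_abs hek))
  rw [smul_comm, norm_isUnit_zsmul _ hunit] at hk
  exact (hu k).not_gt hk

end IsLocalized

theorem infinite_preimage_unpair_fst {A : Set ℕ} (hA : A.Nonempty) :
    ((fun k : ℕ => k.unpair.1) ⁻¹' A).Infinite := by
  obtain ⟨i, hi⟩ := hA
  exact infinite_of_injective_forall_mem (f := Nat.pair i)
    (fun j k hjk => (Nat.pair_eq_pair.1 hjk).2) fun j => by simpa using hi

theorem exists_family_infinite_symmDiff :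
    ∃ f : Set ℕ → Set ℕ, (∀ S, (f S).Infinite) ∧ ∀ S T, S ≠ T → (f S ∆ f T).Infinite := by
  refine ⟨fun S => (fun k : ℕ => k.unpair.1) ⁻¹' insert 0 (Nat.succ '' S),
    fun S => infinite_preimage_unpair_fst (insert_nonempty _ _), fun S T hST => ?_⟩
  rw [← preimage_symmDiff]
  refine infinite_preimage_unpair_fst (symmDiff_nonempty.2 fun heq => hST ?_)
  ext i
  simpa using Set.ext_iff.1 heq (i + 1)

theorem abs_indicator_one_sub (A B : Set ℕ) (k : ℕ) :
    |(A.indicator 1 - B.indicator 1 : ℕ → ℤ) k| = (A ∆ B).indicator 1 k := by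
  rw [Pi.sub_apply, ← apply_indicator_symmDiff (fun x : ℤ => abs_neg x)]
  exact abs_of_nonneg (indicator_nonneg (fun _ _ => zero_le_one) k)

theorem support_indicator_one_sub (A B : Set ℕ) :
    Function.support (A.indicator 1 - B.indicator 1 : ℕ → ℤ) = A ∆ B := by
  ext k
  rw [Function.mem_support, ← abs_ne_zero, abs_indicator_one_sub]
  simp

theorem IsLocalized.continuum_le_mk_statCharSet_diff_charSet {Q : ℕ → ℤ} {m : ℕ → ℕ}
    {u : ℕ → Circle1} {φ : ℤ → ℝ} (h : IsLocalized Q m u φ) (hm : HasLinearGaps m) {δ : ℝ}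
    (hδ : 0 < δ) (hu : ∀ k, δ ≤ ‖Q (m k) • u k‖) :
    𝔠 ≤ #↥(statCharSet Q \ charSet Q) := by
  obtain ⟨f, hinf, hsymm⟩ := exists_family_infinite_symmDiff
  let e (S : Set ℕ) : ℕ → ℤ := (f S).indicator 1
  have hnotMem {e : ℕ → ℤ} (he : ∀ k, |e k| ≤ 1) (he' : (Function.support e).Infinite) :
      ∑' k, e k • u k ∉ charSet Q :=
    h.not_tendsto_zsmul_tsum hm.eventually_sub_notMem hδ hu he he'
  have habs (S : Set ℕ) (k : ℕ) : |e S k| ≤ 1 := by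
    simp only [e, indicator]
    split_ifs <;> simp
  have habs_sub (S T : Set ℕ) (k : ℕ) : |(e S - e T) k| ≤ 1 :=
    (abs_indicator_one_sub _ _ k).trans_le (indicator_le_self' (fun _ _ => zero_le_one) k)
  have hmem (S : Set ℕ) : ∑' k, e S k • u k ∈ statCharSet Q \ charSet Q :=
    ⟨fun _ hε => h.densityZero_le_norm_tsum hm.densityZero_range (habs S) hε,
      hnotMem (habs S) (by simpa [e, support_indicator] using hinf S)⟩
  have hinj : Function.Injective fun S => ∑' k, e S k • u k := by
    intro S T hST
    by_contra hne
    refine hnotMem (habs_sub S T) (by simpa [e, support_indicator_one_sub] using hsymm S T hne) ?_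
    have hzero : ∑' k, (e S - e T) k • u k = 0 := by
      simp only [Pi.sub_apply, sub_smul]
      rw [(h.summable_zsmul (habs S)).tsum_sub (h.summable_zsmul (habs T))]
      exact sub_eq_zero.2 hST
    rw [hzero]
    simp [charSet]
  rw [← Cardinal.mk_set_nat]
  exact Cardinal.mk_le_of_injective (hinj.codRestrict hmem)

theorem exists_nat_mul_mem_Icc {a b t : ℝ} (ht : 0 < t) (htb : t ≤ b) (hab : 2 * a ≤ b) :
    ∃ c : ℕ, c * t ∈ Icc a b := by
  rcases le_or_gt a t with hat | hta
  · exact ⟨1, by simpa using hat, by simpa using htb⟩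
  · have hlow : a / t ≤ ⌈a / t⌉₊ := Nat.le_ceil _
    have hupp : (⌈a / t⌉₊ : ℝ) < a / t + 1 := Nat.ceil_lt_add_one (by bound)
    rw [div_le_iff₀ ht] at hlow
    rw [div_add_one ht.ne', lt_div_iff₀ ht] at hupp
    exact ⟨⌈a / t⌉₊, hlow, by linarith⟩

/-- `3 / 4` stands in for the sharp ratio `1 / √2`. -/
theorem le_two_mul_pow_mul_of_two_mul_le {x : ℕ → ℝ} (hx : ∀ n, 0 ≤ x n) (hanti : Antitone x)
    (hhalf : ∀ n, 2 * x (n + 2) ≤ x n) (n d : ℕ) : x (n + d) ≤ 2 * (3 / 4) ^ d * x n := by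
  induction d using Nat.twoStepInduction with
  | zero =>
    rw [pow_zero, add_zero]
    linarith [hx n]
  | one => linarith [hx n, hanti n.le_succ]
  | more d ih _ =>
    calc x (n + d + 2) ≤ (3 / 4) ^ 2 * x (n + d) := by linarith [hx (n + d), hhalf (n + d)]
      _ ≤ (3 / 4) ^ 2 * (2 * (3 / 4) ^ d * x n) := by gcongr
      _ = 2 * (3 / 4) ^ (d + 2) * x n := by ring

theorem summable_pow_natAbs {r : ℝ} (hr₀ : 0 ≤ r) (hr₁ : r < 1) :
    Summable fun z : ℤ => r ^ z.natAbs :=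
  .of_nat_of_neg (by simpa using summable_geometric_of_lt_one hr₀ hr₁)
    (by simpa using summable_geometric_of_lt_one hr₀ hr₁)

namespace CF

variable {α : ℝ}

theorem irrational_G (hirr : Irrational α) (n : ℕ) : Irrational (G α n) := by
  induction n with
  | zero => exact hirr
  | succ n ih => exact (irrational_inv_iff.2 ih).sub_intCast ⌊(G α n)⁻¹⌋

theorem G_mem_Ioo (hα : α ∈ Ioo (0 : ℝ) 1) (hirr : Irrational α) (n : ℕ) :
    G α n ∈ Ioo (0 : ℝ) 1 := by
  cases n with
  | zero => exact hα
  | succ n =>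
    exact ⟨(Int.fract_nonneg _).lt_of_ne' (irrational_G hirr (n + 1)).ne_zero, Int.fract_lt_one _⟩

theorem G_mul_a_add_G {n : ℕ} (hn : 0 < G α n) : G α n * (a α (n + 1) + G α (n + 1)) = 1 := by
  have hfloor : (a α (n + 1) : ℝ) = ⌊(G α n)⁻¹⌋ :=
    natCast_floor_eq_intCast_floor (inv_nonneg.2 hn.le)
  rw [hfloor, G, Int.floor_add_fract, mul_inv_cancel₀ hn.ne']

theorem θ_add_two (n : ℕ) : θ α (n + 2) = a α (n + 2) * θ α (n + 1) + θ α n := by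
  simp only [θ, q, p]
  push_cast
  ring

theorem coe_θ (n : ℕ) : (θ α n : Circle1) = q α n • (α : Circle1) := by
  rw [← AddCircle.coe_nsmul, nsmul_eq_mul, ← sub_eq_zero, ← AddCircle.coe_sub,
    AddCircle.coe_eq_zero_iff]
  exact ⟨-p α n, by simp [θ]⟩

theorem q_zsmul_coe_θ_comm (m n : ℕ) :
    (q α n : ℤ) • (θ α m : Circle1) = (q α m : ℤ) • (θ α n : Circle1) := by
  simp only [coe_θ, natCast_zsmul]
  exact smul_comm _ _ _

theorem norm_q_zsmul_coe_θ_le_mul (m n : ℕ) :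
    ‖(q α n : ℤ) • (θ α m : Circle1)‖ ≤ q α n * |θ α m| := by
  rw [natCast_zsmul]
  exact norm_nsmul_le.trans (by gcongr; exact QuotientAddGroup.norm_mk_le_norm)

theorem one_le_a_succ {n : ℕ} (h₀ : 0 < G α n) (h₁ : G α n ≤ 1) : 1 ≤ a α (n + 1) :=
  Nat.le_floor (by simpa using (one_le_inv₀ h₀).2 h₁)

theorem θ_succ (hG : ∀ n, G α n ∈ Ioo (0 : ℝ) 1) (n : ℕ) : θ α (n + 1) = -G α (n + 1) * θ α n := by
  induction n with
  | zero =>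
    have hα : α * (a α 1 + G α 1) = 1 := G_mul_a_add_G (hG 0).1
    simp only [θ, q, p]
    push_cast
    linear_combination hα
  | succ n ih =>
    rw [θ_add_two, ih]
    linear_combination -θ α n * G_mul_a_add_G (hG (n + 1)).1

theorem abs_θ_succ (hG : ∀ n, G α n ∈ Ioo (0 : ℝ) 1) (n : ℕ) :
    |θ α (n + 1)| = G α (n + 1) * |θ α n| := by
  rw [θ_succ hG, abs_mul, abs_neg, abs_of_pos (hG (n + 1)).1]

theorem abs_θ_pos (hG : ∀ n, G α n ∈ Ioo (0 : ℝ) 1) (n : ℕ) : 0 < |θ α n| := by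
  induction n with
  | zero => simpa [θ, q, p] using (show 0 < α from (hG 0).1).ne'
  | succ n ih => exact abs_θ_succ hG n ▸ mul_pos (hG (n + 1)).1 ih

theorem antitone_abs_θ (hG : ∀ n, G α n ∈ Ioo (0 : ℝ) 1) : Antitone fun n => |θ α n| :=
  antitone_nat_of_succ_le fun n =>
    abs_θ_succ hG n ▸ mul_le_of_le_one_left (abs_nonneg _) (hG (n + 1)).2.le

theorem abs_θ_eq (hG : ∀ n, G α n ∈ Ioo (0 : ℝ) 1) (n : ℕ) :
    |θ α n| = a α (n + 2) * |θ α (n + 1)| + |θ α (n + 2)| := by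
  rw [abs_θ_succ hG (n + 1), abs_θ_succ hG n]
  linear_combination -|θ α n| * G_mul_a_add_G (hG (n + 1)).1

theorem two_mul_abs_θ_add_two_le (hG : ∀ n, G α n ∈ Ioo (0 : ℝ) 1) (n : ℕ) :
    2 * |θ α (n + 2)| ≤ |θ α n| := by
  have ha : (1 : ℝ) ≤ a α (n + 2) := by exact_mod_cast one_le_a_succ (hG _).1 (hG _).2.le
  have hanti : |θ α (n + 2)| ≤ |θ α (n + 1)| := antitone_abs_θ hG (n + 1).le_succ
  have hmul : |θ α (n + 1)| ≤ a α (n + 2) * |θ α (n + 1)| :=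
    le_mul_of_one_le_left (abs_nonneg _) ha
  linarith [abs_θ_eq hG n]

theorem q_succ_add_q_le (hG : ∀ n, G α n ∈ Ioo (0 : ℝ) 1) (n : ℕ) :
    q α (n + 1) + q α n ≤ q α (n + 2) :=
  Nat.add_le_add_right (Nat.le_mul_of_pos_left _ (one_le_a_succ (hG _).1 (hG _).2.le)) _

theorem monotone_q (hG : ∀ n, G α n ∈ Ioo (0 : ℝ) 1) : Monotone (q α) := by
  refine monotone_nat_of_le_succ fun n => ?_
  cases n with
  | zero => exact one_le_a_succ (hG 0).1 (hG 0).2.le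
  | succ n => exact (Nat.le_add_right _ _).trans (q_succ_add_q_le hG n)

theorem q_pos (hG : ∀ n, G α n ∈ Ioo (0 : ℝ) 1) (n : ℕ) : 0 < q α n :=
  Nat.one_pos.trans_le (monotone_q hG n.zero_le)

theorem two_mul_q_le (hG : ∀ n, G α n ∈ Ioo (0 : ℝ) 1) (n : ℕ) : 2 * q α n ≤ q α (n + 2) := by
  linarith [q_succ_add_q_le hG n, monotone_q hG n.le_succ]

theorem abs_θ_mul_q_succ_add_eq_one (hG : ∀ n, G α n ∈ Ioo (0 : ℝ) 1) (n : ℕ) :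
    |θ α n| * q α (n + 1) + |θ α (n + 1)| * q α n = 1 := by
  induction n with
  | zero =>
    have hα : α * (a α 1 + G α 1) = 1 := G_mul_a_add_G (hG 0).1
    rw [abs_θ_succ hG]
    simp only [θ, q, p, Nat.cast_one, Nat.cast_zero, one_mul, sub_zero, mul_one,
      abs_of_pos (show 0 < α from (hG 0).1)]
    linear_combination hα
  | succ n ih =>
    rw [abs_θ_eq hG n] at ih
    simp only [q]
    push_cast
    linear_combination ih

/-- Vahlen's theorem. -/
theorem q_mul_abs_θ_le_half_or (hG : ∀ n, G α n ∈ Ioo (0 : ℝ) 1) (n : ℕ) :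
    q α n * |θ α n| ≤ 1 / 2 ∨ q α (n + 1) * |θ α (n + 1)| ≤ 1 / 2 := by
  by_contra! h
  obtain ⟨h₀, h₁⟩ := h
  have hq : (q α n : ℝ) ≤ q α (n + 1) := by exact_mod_cast monotone_q hG n.le_succ
  have hrearrange : 0 ≤ (q α (n + 1) - q α n) * (|θ α n| - |θ α (n + 1)|) :=
    mul_nonneg (sub_nonneg.2 hq) (sub_nonneg.2 (antitone_abs_θ hG n.le_succ))
  linarith [abs_θ_mul_q_succ_add_eq_one hG n]

theorem exists_nat_mul_q_mul_abs_θ_mem_Icc (hG : ∀ n, G α n ∈ Ioo (0 : ℝ) 1) (n : ℕ) :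
    ∃ m ∈ Icc n (n + 1), ∃ c : ℕ, c * (q α m * |θ α m|) ∈ Icc (1 / 4 : ℝ) (1 / 2) := by
  have hpos (m : ℕ) : 0 < q α m * |θ α m| :=
    mul_pos (Nat.cast_pos.2 (q_pos hG m)) (abs_θ_pos hG m)
  rcases q_mul_abs_θ_le_half_or hG n with h | h
  · exact ⟨n, by simp, exists_nat_mul_mem_Icc (hpos n) h (by norm_num)⟩
  · exact ⟨n + 1, by simp, exists_nat_mul_mem_Icc (hpos _) h (by norm_num)⟩

theorem q_le_two_mul_pow_mul_q_add (hG : ∀ n, G α n ∈ Ioo (0 : ℝ) 1) (n d : ℕ) :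
    (q α n : ℝ) ≤ 2 * (3 / 4) ^ d * q α (n + d) := by
  have hpos (n : ℕ) : (0 : ℝ) < q α n := Nat.cast_pos.2 (q_pos hG n)
  have hinv : (q α (n + d) : ℝ)⁻¹ ≤ 2 * (3 / 4) ^ d * (q α n : ℝ)⁻¹ := by
    refine le_two_mul_pow_mul_of_two_mul_le (x := fun n => (q α n : ℝ)⁻¹)
      (fun n => (inv_pos.2 (hpos n)).le)
      (fun i j hij => inv_anti₀ (hpos i) (by exact_mod_cast monotone_q hG hij)) (fun n => ?_) n d
    rw [← div_eq_mul_inv, div_le_iff₀ (hpos _), ← div_eq_inv_mul, le_div_iff₀ (hpos _)]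
    exact_mod_cast two_mul_q_le hG n
  rwa [← div_eq_mul_inv, le_div_iff₀ (hpos _), ← div_eq_inv_mul, div_le_iff₀ (hpos _)] at hinv

theorem abs_θ_add_le (hG : ∀ n, G α n ∈ Ioo (0 : ℝ) 1) (n d : ℕ) :
    |θ α (n + d)| ≤ 2 * (3 / 4) ^ d * |θ α n| :=
  le_two_mul_pow_mul_of_two_mul_le (fun _ => abs_nonneg _) (antitone_abs_θ hG)
    (two_mul_abs_θ_add_two_le hG) n d

theorem norm_q_zsmul_coe_θ_le (hG : ∀ n, G α n ∈ Ioo (0 : ℝ) 1) (m n : ℕ) :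
    ‖(q α n : ℤ) • (θ α m : Circle1)‖ ≤
      2 * (3 / 4) ^ ((n : ℤ) - m).natAbs * (q α m * |θ α m|) := by
  rcases le_total n m with h | h <;> obtain ⟨d, rfl⟩ := Nat.exists_eq_add_of_le h
  · have hd : ((n : ℤ) - (n + d : ℕ)).natAbs = d := by omega
    calc ‖(q α n : ℤ) • (θ α (n + d) : Circle1)‖
        ≤ q α n * |θ α (n + d)| := norm_q_zsmul_coe_θ_le_mul _ _
      _ ≤ 2 * (3 / 4) ^ d * q α (n + d) * |θ α (n + d)| := by
        gcongr
        exact q_le_two_mul_pow_mul_q_add hG n d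
      _ = _ := by rw [hd, mul_assoc]
  · have hd : (((m + d : ℕ) : ℤ) - m).natAbs = d := by omega
    calc ‖(q α (m + d) : ℤ) • (θ α m : Circle1)‖
        = ‖(q α m : ℤ) • (θ α (m + d) : Circle1)‖ := by rw [q_zsmul_coe_θ_comm]
      _ ≤ q α m * |θ α (m + d)| := norm_q_zsmul_coe_θ_le_mul _ _
      _ ≤ q α m * (2 * (3 / 4) ^ d * |θ α m|) := by
        gcongr
        exact abs_θ_add_le hG m d
      _ = _ := by rw [hd, mul_left_comm]

theorem norm_q_zsmul_nsmul_coe_θ_le (hG : ∀ n, G α n ∈ Ioo (0 : ℝ) 1) {c m : ℕ}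
    (hc : c * (q α m * |θ α m|) ≤ 1 / 2) (n : ℕ) :
    ‖(q α n : ℤ) • c • (θ α m : Circle1)‖ ≤ (3 / 4) ^ ((n : ℤ) - m).natAbs := by
  rw [smul_comm]
  calc ‖c • (q α n : ℤ) • (θ α m : Circle1)‖
      ≤ c * (2 * (3 / 4) ^ ((n : ℤ) - m).natAbs * (q α m * |θ α m|)) :=
        norm_nsmul_le.trans (by gcongr; exact norm_q_zsmul_coe_θ_le hG m n)
    _ = 2 * (3 / 4) ^ ((n : ℤ) - m).natAbs * (c * (q α m * |θ α m|)) := by ring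
    _ ≤ 2 * (3 / 4) ^ ((n : ℤ) - m).natAbs * (1 / 2) := by gcongr
    _ = (3 / 4) ^ ((n : ℤ) - m).natAbs := by ring

theorem norm_q_zsmul_nsmul_coe_θ_self {c m : ℕ} (hc : c * (q α m * |θ α m|) ≤ 1 / 2) :
    ‖(q α m : ℤ) • c • (θ α m : Circle1)‖ = c * (q α m * |θ α m|) := by
  have habs : |q α m * (c * θ α m)| = c * (q α m * |θ α m|) := by
    rw [abs_mul, abs_mul, Nat.abs_cast, Nat.abs_cast, mul_left_comm]
  rw [natCast_zsmul, ← AddCircle.coe_nsmul, ← AddCircle.coe_nsmul, nsmul_eq_mul, nsmul_eq_mul,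
    (AddCircle.norm_coe_eq_abs_iff 1 one_ne_zero).2 (by rwa [habs, abs_one]), habs]

theorem exists_isLocalized_q (hG : ∀ n, G α n ∈ Ioo (0 : ℝ) 1) :
    ∃ (m : ℕ → ℕ) (u : ℕ → Circle1), HasLinearGaps m ∧
      IsLocalized (fun n => (q α n : ℤ)) m u (fun z => (3 / 4) ^ z.natAbs) ∧
      ∀ k, 1 / 4 ≤ ‖(q α (m k) : ℤ) • u k‖ := by
  choose m hm c hc using fun k : ℕ => exists_nat_mul_q_mul_abs_θ_mem_Icc hG (2 * k ^ 2)
  have hgaps : HasLinearGaps m := fun k => by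
    have hlow := (hm (k + 1)).1
    have hupp := (hm k).2
    linarith [add_sq k 1]
  have hinj : Function.Injective fun k => ((0 : ℕ) : ℤ) - m k := fun i j hij =>
    hgaps.strictMono.injective (by simpa using hij)
  have hprofile := summable_pow_natAbs (r := (3 / 4 : ℝ)) (by norm_num) (by norm_num)
  have hle (n k : ℕ) := norm_q_zsmul_nsmul_coe_θ_le hG (hc k).2 n
  refine ⟨m, fun k => c k • (θ α (m k) : Circle1), hgaps,
    ⟨hgaps.strictMono.injective, ?_, hprofile, hle⟩,
    fun k => (hc k).1.trans_eq (norm_q_zsmul_nsmul_coe_θ_self (hc k).2).symm⟩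
  exact .of_norm_bounded (hprofile.comp_injective hinj) fun k => by simpa [q] using hle 0 k

end CF

end StatisticalConvergence

/-- **Theorem C.** For irrational `α ∈ (0,1)`, `|t^s_(qₙ)(𝕋) \ t_(qₙ)(𝕋)| = 𝔠`. -/
theorem stmt_1 (α : ℝ) (hα : α ∈ Set.Ioo (0 : ℝ) 1) (hirr : Irrational α) :
    Cardinal.mk
      ↥(statCharSet (fun n => (q α n : ℤ)) \ charSet (fun n => (q α n : ℤ))) =
      Cardinal.continuum := by
  have hG := G_mem_Ioo hα hirr
  obtain ⟨m, u, hm, hloc, hu⟩ := exists_isLocalized_q hG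
  refine le_antisymm ?_ (hloc.continuum_le_mk_statCharSet_diff_charSet hm (by norm_num) hu)
  calc Cardinal.mk ↥(statCharSet (fun n => (q α n : ℤ)) \ charSet (fun n => (q α n : ℤ)))
      ≤ Cardinal.mk Circle1 := Cardinal.mk_set_le _
    _ ≤ Cardinal.mk ℝ := Cardinal.mk_le_of_surjective QuotientAddGroup.mk_surjective
    _ = Cardinal.continuum := Cardinal.mk_real
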